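/- Let μ be a compactly supported Borel probability measure on ℝ and let (Q_n)_{n≥0}, (q_n)_{n≥0} be defined from μ as in the context. Fix t ≥ 1, let Φ ∈ ℝ^{t×t} be strictly lower triangular, and let Δ̄ ∈ ℝ^{t×t} be arbitrary. Define P(λ) := Σ_{i=1}^{t} Q_i(λ)·Φ^{i−1} (with Φ^0 := I_t), Σ := ∫ P(λ)·Δ̄·P(λ)ᵀ dμ(λ) (entrywise integral), and Δ := Δ̄ + Φ·Σ·Φᵀ. Then Σ = Σ_{m=1}^{t} Σ_{n=1}^{t} q_{m+n} · Φ^{m−1} · Δ · (Φ^{n−1})ᵀ. -/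

import Mathlib

open MeasureTheory Matrix

/-!
Write `c m n = ∫ Q m * Q n`. Expanding `∫ λ * Q m * Q n` by the recursion in either factor shows
that `c m n` and its convolution with the Hankel array `q (i + j)` have the same increment along
each antidiagonal `m + n = const`. On the boundary `m = 0` that convolution is empty and
`∫ Q n = 0` for `n ≥ 1`, so `c (m + 1) (n + 1)` is the two-dimensional convolution of
`h i j = q (i + j + 2)` with `c`.

For nilpotent `Φ`, convolution of arrays becomes composition of the operators
`S f : D ↦ ∑ f k l • Φ ^ k * D * (Φ ^ l)ᵀ`. With `c⁺` the shift of `c` by one in both indices,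
`Sig = S c⁺ Δbar` and `Δ = Δbar + Φ * Sig * Φᵀ = S c Δbar`, hence `Sig = S h (S c Δbar) = S h Δ`.
-/

section Convolution

variable {R : Type*} [Semiring R]

/-- The convolution of two arrays indexed by `ℕ × ℕ`, that is, the coefficients of the product of
their bivariate generating series. -/
def doubleConv (f g : ℕ → ℕ → R) (m n : ℕ) : R :=
  ∑ u ∈ Finset.range (m + 1), ∑ v ∈ Finset.range (n + 1), f (m - u) (n - v) * g u v

/-- The sum of `q (m + n - u - v) * c u v` over `u < m` and `v < n`: the convolution of `c` with the
Hankel array of `q`, restricted to Hankel indices that are both positive. -/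
def hankelConv (q : ℕ → R) (c : ℕ → ℕ → R) (m n : ℕ) : R :=
  ∑ u ∈ Finset.range m, ∑ v ∈ Finset.range n, q (m + n - u - v) * c u v

theorem hankelConv_succ_succ (q : ℕ → R) (c : ℕ → ℕ → R) (m n : ℕ) :
    hankelConv q c (m + 1) (n + 1) = doubleConv (fun i j ↦ q (i + 1 + (j + 1))) c m n := by
  refine Finset.sum_congr rfl fun u hu ↦ Finset.sum_congr rfl fun v hv ↦ ?_
  rw [Finset.mem_range] at hu hv
  congr 2
  omega

theorem hankelConv_succ_left (q : ℕ → R) (c : ℕ → ℕ → R) (m n : ℕ) :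
    hankelConv q c (m + 1) n =
      (∑ u ∈ Finset.range m, ∑ v ∈ Finset.range n, q (m + n + 1 - u - v) * c u v) +
        ∑ v ∈ Finset.range n, q (n + 1 - v) * c m v := by
  have hm (v : ℕ) : m + n + 1 - m - v = n + 1 - v := by omega
  simp only [hankelConv, Finset.sum_range_succ, add_right_comm m 1 n, hm]

theorem hankelConv_succ_right (q : ℕ → R) (c : ℕ → ℕ → R) (m n : ℕ) :
    hankelConv q c m (n + 1) =
      (∑ u ∈ Finset.range m, ∑ v ∈ Finset.range n, q (m + n + 1 - u - v) * c u v) +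
        ∑ u ∈ Finset.range m, q (m + 1 - u) * c u n := by
  have hn (u : ℕ) : m + n + 1 - u - n = m + 1 - u := by omega
  simp only [hankelConv, Finset.sum_range_succ, Finset.sum_add_distrib, ← add_assoc, hn]

end Convolution

section FreeCumulants

variable {R A : Type*} [CommRing R] [CommRing A] [Algebra R A]

/-- The recursion producing the elements `Q n` and the free cumulants `q n` of `x` with respect to a
functional `L`. The sum is indexed by `v = n + 1 - i`, where `i` is the index of the cumulant;
`q 0` does not occur and is left unconstrained. -/
structure IsFreeCumulantSystem (L : A →ₗ[R] R) (x : A) (Q : ℕ → A) (q : ℕ → R) : Prop where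
  zero : Q 0 = 1
  succ (n : ℕ) : Q (n + 1) = x * Q n - ∑ v ∈ Finset.range (n + 1), q (n + 1 - v) • Q v
  cumulant (n : ℕ) : q (n + 1) = L (x * Q n)

namespace IsFreeCumulantSystem

variable {L : A →ₗ[R] R} {x : A} {Q : ℕ → A} {q : ℕ → R}

theorem mul_eq_add_sum (h : IsFreeCumulantSystem L x Q q) (n : ℕ) :
    x * Q n = Q (n + 1) + ∑ v ∈ Finset.range (n + 1), q (n + 1 - v) • Q v := by
  rw [h.succ, sub_add_cancel]

theorem map_succ_eq_zero (h : IsFreeCumulantSystem L x Q q) (hL : L 1 = 1) (n : ℕ) :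
    L (Q (n + 1)) = 0 := by
  induction n using Nat.strong_induction_on with
  | _ n ih =>
    have hsum : ∑ v ∈ Finset.range n, q (n + 1 - (v + 1)) * L (Q (v + 1)) = 0 :=
      Finset.sum_eq_zero fun v hv ↦ by rw [ih v (Finset.mem_range.mp hv), mul_zero]
    rw [h.succ, map_sub, ← h.cumulant, map_sum]
    simp only [map_smul, smul_eq_mul]
    rw [Finset.sum_range_succ', hsum, h.zero, hL]
    simp

theorem map_mul_mul (h : IsFreeCumulantSystem L x Q q) (m : ℕ) (a : A) :
    L (x * (Q m * a)) =
      L (Q (m + 1) * a) + ∑ u ∈ Finset.range (m + 1), q (m + 1 - u) * L (Q u * a) := by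
  rw [← mul_assoc, h.mul_eq_add_sum, add_mul, Finset.sum_mul]
  simp only [map_add, map_sum, smul_mul_assoc, map_smul, smul_eq_mul]

theorem map_mul_add_hankelConv (h : IsFreeCumulantSystem L x Q q) (m n : ℕ) :
    L (Q (m + 1) * Q n) + hankelConv q (fun u v ↦ L (Q u * Q v)) m (n + 1) =
      L (Q m * Q (n + 1)) + hankelConv q (fun u v ↦ L (Q u * Q v)) (m + 1) n := by
  have hleft := h.map_mul_mul m (Q n)
  have hright := h.map_mul_mul n (Q m)
  simp only [mul_comm _ (Q m)] at hright
  rw [Finset.sum_range_succ, Nat.add_sub_cancel_left] at hleft hright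
  rw [hankelConv_succ_left, hankelConv_succ_right]
  linear_combination hright - hleft

theorem map_mul_eq_add_hankelConv (h : IsFreeCumulantSystem L x Q q) (m n : ℕ) :
    L (Q m * Q n) = L (Q (m + n)) + hankelConv q (fun u v ↦ L (Q u * Q v)) m n := by
  induction m generalizing n with
  | zero => simp [hankelConv, h.zero]
  | succ m ih =>
    rw [add_right_comm m 1 n]
    linear_combination h.map_mul_add_hankelConv m n + ih (n + 1)

theorem map_succ_mul_succ (h : IsFreeCumulantSystem L x Q q) (hL : L 1 = 1) (m n : ℕ) :
    L (Q (m + 1) * Q (n + 1)) =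
      doubleConv (fun i j ↦ q (i + 1 + (j + 1))) (fun u v ↦ L (Q u * Q v)) m n := by
  rw [h.map_mul_eq_add_hankelConv, ← add_assoc, h.map_succ_eq_zero hL, zero_add,
    hankelConv_succ_succ]

end IsFreeCumulantSystem

end FreeCumulants

theorem sum_range_sum_range_eq_sum_range_diag {M : Type*} [AddCommMonoid M] (t : ℕ)
    (F : ℕ → ℕ → M) (hF : ∀ i u, t ≤ i + u → F i u = 0) :
    ∑ i ∈ Finset.range t, ∑ u ∈ Finset.range t, F i u =
      ∑ k ∈ Finset.range t, ∑ u ∈ Finset.range (k + 1), F (k - u) u := by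
  rw [Finset.sum_comm, Finset.sum_range_diag_flip t fun u i ↦ F i u]
  refine Finset.sum_congr rfl fun u _ ↦ (Finset.sum_subset ?_ fun i _ hi ↦ hF i u ?_).symm
  · exact Finset.range_subset_range.mpr (Nat.sub_le t u)
  · rw [Finset.mem_range] at hi
    omega

section SandwichSum

variable {R A : Type*} [CommSemiring R] [Semiring A] [Algebra R A]

/-- The two-sided polynomial expression `∑ k l, f k l • a ^ k * D * b ^ l` over `k, l < t`; if
`a ^ t = b ^ t = 0` it is the generating series of `f` evaluated at left multiplication by `a` and
right multiplication by `b`, applied to `D`. -/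
def sandwichSum (t : ℕ) (f : ℕ → ℕ → R) (a b D : A) : A :=
  ∑ k ∈ Finset.range t, ∑ l ∈ Finset.range t, f k l • (a ^ k * D * b ^ l)

variable {t : ℕ} {a b : A}

theorem mul_sandwichSum_mul (f : ℕ → ℕ → R) (D : A) (m n : ℕ) :
    a ^ m * sandwichSum t f a b D * b ^ n =
      ∑ u ∈ Finset.range t, ∑ v ∈ Finset.range t, f u v • (a ^ (m + u) * D * b ^ (v + n)) := by
  simp only [sandwichSum, Finset.mul_sum, Finset.sum_mul, mul_smul_comm, smul_mul_assoc, pow_add,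
    mul_assoc]

theorem sandwichSum_sandwichSum (ha : a ^ t = 0) (hb : b ^ t = 0) (f g : ℕ → ℕ → R) (D : A) :
    sandwichSum t f a b (sandwichSum t g a b D) = sandwichSum t (doubleConv f g) a b D := by
  let F (i u j v : ℕ) : A := (f i j * g u v) • (a ^ (i + u) * D * b ^ (v + j))
  have hFleft (i u : ℕ) (hiu : t ≤ i + u) (j v : ℕ) : F i u j v = 0 := by
    simp [F, pow_eq_zero_of_le hiu ha]
  have hFright (i u j v : ℕ) (hjv : t ≤ j + v) : F i u j v = 0 := by
    simp [F, pow_eq_zero_of_le (add_comm j v ▸ hjv) hb]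
  calc
    sandwichSum t f a b (sandwichSum t g a b D)
    _ = ∑ i ∈ Finset.range t, ∑ u ∈ Finset.range t,
          ∑ j ∈ Finset.range t, ∑ v ∈ Finset.range t, F i u j v := by
      rw [sandwichSum]
      refine Finset.sum_congr rfl fun i _ ↦ ?_
      rw [Finset.sum_comm]
      refine Finset.sum_congr rfl fun j _ ↦ ?_
      simp only [mul_sandwichSum_mul, Finset.smul_sum, smul_smul, F]
    _ = ∑ k ∈ Finset.range t, ∑ u ∈ Finset.range (k + 1),
          ∑ l ∈ Finset.range t, ∑ v ∈ Finset.range (l + 1), F (k - u) u (l - v) v := by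
      simp only [fun i u ↦ sum_range_sum_range_eq_sum_range_diag t (F i u) (hFright i u)]
      exact sum_range_sum_range_eq_sum_range_diag t _ fun i u hiu ↦ by simp [hFleft i u hiu]
    _ = sandwichSum t (doubleConv f g) a b D := by
      refine Finset.sum_congr rfl fun k _ ↦ ?_
      rw [Finset.sum_comm]
      refine Finset.sum_congr rfl fun l _ ↦ ?_
      simp only [doubleConv, Finset.sum_smul]
      refine Finset.sum_congr rfl fun u hu ↦ Finset.sum_congr rfl fun v hv ↦ ?_
      rw [Finset.mem_range, Nat.lt_succ_iff] at hu hv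
      simp only [F, Nat.sub_add_cancel hu, Nat.add_sub_cancel' hv]

theorem sandwichSum_succ (ha : a ^ t = 0) (hb : b ^ t = 0) (f : ℕ → ℕ → R) (D : A) :
    sandwichSum (t + 1) f a b D = sandwichSum t f a b D := by
  simp [sandwichSum, Finset.sum_range_succ, ha, hb]

theorem sandwichSum_eq_add_mul_mul (ha : a ^ t = 0) (hb : b ^ t = 0) {f : ℕ → ℕ → R}
    (h00 : f 0 0 = 1) (hleft : ∀ n, f 0 (n + 1) = 0) (hright : ∀ n, f (n + 1) 0 = 0) (D : A) :
    sandwichSum t f a b D = D + a * sandwichSum t (fun k l ↦ f (k + 1) (l + 1)) a b D * b := by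
  have hshift := mul_sandwichSum_mul (t := t) (a := a) (b := b) (fun k l ↦ f (k + 1) (l + 1)) D 1 1
  rw [pow_one, pow_one] at hshift
  rw [← sandwichSum_succ ha hb, hshift]
  simp [sandwichSum, Finset.sum_range_succ', h00, hleft, hright, add_comm]

end SandwichSum

theorem pow_card_eq_zero_of_strictLowerTriangular {n R : Type*} [Fintype n] [LinearOrder n]
    [CommRing R] {M : Matrix n n R} (hM : ∀ i j, i ≤ j → M i j = 0) : M ^ Fintype.card n = 0 := by
  have hcharpoly : M.charpoly = Polynomial.X ^ Fintype.card n := by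
    rw [← charpoly_transpose, charpoly_of_isUpperTriangular Mᵀ fun i j hij ↦ hM j i hij.le]
    simp [hM]
  simpa [hcharpoly] using aeval_self_charpoly M

theorem integral_sum_smul_mul_mul_transpose_apply {α n : Type*} [MeasurableSpace α] {μ : Measure α}
    [Fintype n] [DecidableEq n] {f : ℕ → α → ℝ} (hf : ∀ k l, Integrable (fun x ↦ f k x * f l x) μ)
    (t : ℕ) (Φ D : Matrix n n ℝ) (i j : n) :
    ∫ x, ((∑ k ∈ Finset.range t, f k x • Φ ^ k) * D *
        (∑ k ∈ Finset.range t, f k x • Φ ^ k)ᵀ) i j ∂μ =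
      sandwichSum t (fun k l ↦ ∫ x, f k x * f l x ∂μ) Φ Φᵀ D i j := by
  have hexpand (x : α) :
      ((∑ k ∈ Finset.range t, f k x • Φ ^ k) * D * (∑ k ∈ Finset.range t, f k x • Φ ^ k)ᵀ) i j =
        ∑ k ∈ Finset.range t, ∑ l ∈ Finset.range t,
          f k x * f l x * (Φ ^ k * D * Φᵀ ^ l) i j := by
    simp only [transpose_sum, transpose_smul, transpose_pow, Finset.sum_mul, Finset.mul_sum,
      smul_mul_assoc, mul_smul_comm, Finset.smul_sum, smul_smul, Matrix.sum_apply,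
      Matrix.smul_apply, smul_eq_mul]
    rw [Finset.sum_comm]
    simp only [mul_comm (f _ x) (f _ x)]
  have hint (k l : ℕ) : Integrable (fun x ↦ f k x * f l x * (Φ ^ k * D * Φᵀ ^ l) i j) μ :=
    (hf k l).mul_const _
  simp only [hexpand, sandwichSum, Matrix.sum_apply, Matrix.smul_apply, smul_eq_mul]
  rw [integral_finsetSum _ fun k _ ↦ integrable_finsetSum _ fun l _ ↦ hint k l]
  refine Finset.sum_congr rfl fun k _ ↦ ?_
  rw [integral_finsetSum _ fun l _ ↦ hint k l]
  exact Finset.sum_congr rfl fun l _ ↦ integral_mul_const _ _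

theorem integrable_polynomial_eval {μ : Measure ℝ} (hμ : ∀ n : ℕ, Integrable (fun x ↦ x ^ n) μ)
    (p : Polynomial ℝ) : Integrable (fun x ↦ p.eval x) μ := by
  simp only [Polynomial.eval_eq_sum_range]
  exact integrable_finsetSum _ fun n _ ↦ (hμ n).const_mul _

/-- The functional `p ↦ ∫ p dμ` on polynomials, for a measure with finite moments of all orders. -/
noncomputable def momentFunctional (μ : Measure ℝ) (hμ : ∀ n : ℕ, Integrable (fun x ↦ x ^ n) μ) :
    Polynomial ℝ →ₗ[ℝ] ℝ where
  toFun p := ∫ x, p.eval x ∂μ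
  map_add' p r := by
    simp only [Polynomial.eval_add]
    exact integral_add (integrable_polynomial_eval hμ p) (integrable_polynomial_eval hμ r)
  map_smul' a p := by
    simp only [Polynomial.eval_smul, RingHom.id_apply]
    exact integral_smul a _

theorem momentFunctional_apply {μ : Measure ℝ} (hμ : ∀ n : ℕ, Integrable (fun x ↦ x ^ n) μ)
    (p : Polynomial ℝ) : momentFunctional μ hμ p = ∫ x, p.eval x ∂μ :=
  rfl

theorem momentFunctional_one {μ : Measure ℝ} [IsProbabilityMeasure μ]
    (hμ : ∀ n : ℕ, Integrable (fun x ↦ x ^ n) μ) : momentFunctional μ hμ 1 = 1 := by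
  simp [momentFunctional_apply]

theorem isFreeCumulantSystem_momentFunctional {μ : Measure ℝ}
    (hμ : ∀ n : ℕ, Integrable (fun x ↦ x ^ n) μ) {Q : ℕ → Polynomial ℝ} {q : ℕ → ℝ}
    (hQ0 : Q 0 = 1) (hq : ∀ n : ℕ, 1 ≤ n → q n = ∫ x, x * (Q (n - 1)).eval x ∂μ)
    (hQrec : ∀ n : ℕ, 1 ≤ n →
      Q n = Polynomial.X * Q (n - 1) -
        ∑ i ∈ Finset.Icc 1 n, Polynomial.C (q i) * Q (n - i)) :
    IsFreeCumulantSystem (momentFunctional μ hμ) Polynomial.X Q q where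
  zero := hQ0
  succ n := by
    rw [hQrec (n + 1) n.succ_pos, Nat.add_sub_cancel]
    congr 1
    refine Finset.sum_nbij' (n + 1 - ·) (n + 1 - ·) ?_ ?_ ?_ ?_ fun i hi ↦ ?_
    iterate 4
      · simp only [Finset.mem_Icc, Finset.mem_range]
        omega
    rw [Nat.sub_sub_self (Finset.mem_Icc.mp hi).2, Polynomial.smul_eq_C_mul]
  cumulant n := by
    simp [hq (n + 1) n.succ_pos, momentFunctional_apply]

theorem integrable_of_continuous_of_measure_compl_eq_zero {X E : Type*} [TopologicalSpace X]
    [T2Space X] [MeasurableSpace X] [OpensMeasurableSpace X] [NormedAddCommGroup E]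
    [SecondCountableTopologyEither X E] {μ : Measure X} [IsFiniteMeasureOnCompacts μ] {K : Set X}
    (hK : IsCompact K) (hKc : μ Kᶜ = 0) {f : X → E} (hf : Continuous f) : Integrable f μ := by
  rw [← Measure.restrict_eq_self_of_ae_mem (mem_ae_iff.mpr hKc)]
  exact hf.continuousOn.integrableOn_compact hK

theorem stmt13_general {ι : Type*} [Fintype ι] [DecidableEq ι] (μ : Measure ℝ)
    [IsProbabilityMeasure μ] (hμ : ∀ n : ℕ, Integrable (fun x ↦ x ^ n) μ)
    (Q : ℕ → Polynomial ℝ) (q : ℕ → ℝ) (hQ0 : Q 0 = 1)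
    (hq : ∀ n : ℕ, 1 ≤ n → q n = ∫ x, x * (Q (n - 1)).eval x ∂μ)
    (hQrec : ∀ n : ℕ, 1 ≤ n →
      Q n = Polynomial.X * Q (n - 1) - ∑ i ∈ Finset.Icc 1 n, Polynomial.C (q i) * Q (n - i))
    (t : ℕ) (Φ : Matrix ι ι ℝ) (hΦ : Φ ^ t = 0) (Δbar Sig : Matrix ι ι ℝ)
    (hSig : ∀ i j : ι, Sig i j =
      ∫ x, ((∑ k ∈ Finset.range t, (Q (k + 1)).eval x • Φ ^ k) * Δbar *
            (∑ k ∈ Finset.range t, (Q (k + 1)).eval x • Φ ^ k)ᵀ) i j ∂μ)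
    (Δ : Matrix ι ι ℝ) (hΔ : Δ = Δbar + Φ * Sig * Φᵀ) :
    Sig = ∑ m ∈ Finset.range t, ∑ n ∈ Finset.range t,
      q ((m + 1) + (n + 1)) • (Φ ^ m * Δ * (Φ ^ n)ᵀ) := by
  have hsys := isFreeCumulantSystem_momentFunctional hμ hQ0 hq hQrec
  have hone := momentFunctional_one hμ
  have hΦt : Φᵀ ^ t = 0 := by rw [← transpose_pow, hΦ, transpose_zero]
  let c (m n : ℕ) : ℝ := momentFunctional μ hμ (Q m * Q n)
  have hSig_eq : Sig = sandwichSum t (fun k l ↦ c (k + 1) (l + 1)) Φ Φᵀ Δbar := by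
    ext i j
    have hint (k l : ℕ) : Integrable (fun x ↦ (Q (k + 1)).eval x * (Q (l + 1)).eval x) μ := by
      simpa only [Polynomial.eval_mul] using integrable_polynomial_eval hμ (Q (k + 1) * Q (l + 1))
    rw [hSig, integral_sum_smul_mul_mul_transpose_apply hint]
    simp only [c, momentFunctional_apply, Polynomial.eval_mul]
  have hΔ_eq : Δ = sandwichSum t c Φ Φᵀ Δbar := by
    rw [hΔ, hSig_eq]
    refine (sandwichSum_eq_add_mul_mul hΦ hΦt ?_ (fun n ↦ ?_) (fun n ↦ ?_) Δbar).symm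
    all_goals simp only [c, hsys.zero, one_mul, mul_one, hone, hsys.map_succ_eq_zero hone]
  calc
    Sig = sandwichSum t (doubleConv (fun i j ↦ q (i + 1 + (j + 1))) c) Φ Φᵀ Δbar := by
      simp only [hSig_eq, c, hsys.map_succ_mul_succ hone]
    _ = sandwichSum t (fun i j ↦ q (i + 1 + (j + 1))) Φ Φᵀ Δ := by
      rw [hΔ_eq, sandwichSum_sandwichSum hΦ hΦt]
    _ = _ := by simp only [sandwichSum, transpose_pow]

theorem stmt13 (μ : Measure ℝ) [IsProbabilityMeasure μ]
    (K : Set ℝ) (hK : IsCompact K) (hKc : μ Kᶜ = 0)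
    (Q : ℕ → Polynomial ℝ) (q : ℕ → ℝ)
    (hQ0 : Q 0 = 1) (hq0 : q 0 = 1)
    (hq : ∀ n : ℕ, 1 ≤ n → q n = ∫ x, x * (Q (n - 1)).eval x ∂μ)
    (hQrec : ∀ n : ℕ, 1 ≤ n →
      Q n = Polynomial.X * Q (n - 1) - ∑ i ∈ Finset.Icc 1 n, Polynomial.C (q i) * Q (n - i))
    (t : ℕ) (ht : 1 ≤ t)
    (Φ : Matrix (Fin t) (Fin t) ℝ)
    (hΦ : ∀ i j : Fin t, i ≤ j → Φ i j = 0)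
    (Δbar : Matrix (Fin t) (Fin t) ℝ)
    (Sig : Matrix (Fin t) (Fin t) ℝ)
    (hSig : ∀ i j : Fin t, Sig i j =
      ∫ x, ((∑ k ∈ Finset.range t, (Q (k + 1)).eval x • Φ ^ k) * Δbar *
            (∑ k ∈ Finset.range t, (Q (k + 1)).eval x • Φ ^ k)ᵀ) i j ∂μ)
    (Δ : Matrix (Fin t) (Fin t) ℝ) (hΔ : Δ = Δbar + Φ * Sig * Φᵀ) :
    Sig = ∑ m ∈ Finset.range t, ∑ n ∈ Finset.range t,
      q ((m + 1) + (n + 1)) • (Φ ^ m * Δ * (Φ ^ n)ᵀ) := by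
  have hpow : Φ ^ t = 0 := by simpa using pow_card_eq_zero_of_strictLowerTriangular hΦ
  have hmoments (n : ℕ) : Integrable (fun x ↦ x ^ n) μ :=
    integrable_of_continuous_of_measure_compl_eq_zero hK hKc (continuous_pow n)
  exact stmt13_general μ hmoments Q q hQ0 hq hQrec t Φ hpow Δbar Sig hSig Δ hΔ
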